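/- Let n be a natural number. For each s with 0 ≤ 3s ≤ n+1 set μ_s = C(n,s) − C(n,s−1); there are exactly μ_s standard s-element subsets of {1,…,n}. Then there exists a family of integer matrices E_s, for 0 ≤ 3s ≤ n+1, where E_s has rows indexed by {0,1,…,μ_s−1} and columns indexed by the standard s-element subsets, such that: (a) each E_s is unimodular, i.e. the induced ℤ-linear map from ℤ^{μ_s} to integer vectors indexed by standard s-subsets is bijective; and (b) for all i ≤ j with 3j ≤ n+1, E_i · W_{i,j} = D_{i,j} · E_j, where D_{i,j} is the μ_i × μ_j matrix whose (t,t) entry equals C(j−s, i−s) for the unique s with μ_{s−1} ≤ t < μ_s (for 0 ≤ t < μ_i), and whose other entries are zero. -/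

import Mathlib

open scoped Classical

/-- Integer binomial coefficient with the convention `C x y = 0` unless `0 ≤ y ≤ x`. -/
noncomputable def C (x y : ℤ) : ℤ :=
  if 0 ≤ y ∧ y ≤ x then (x.toNat).choose y.toNat else 0

/-- `μ_s(n) = C(n,s) − C(n,s−1)` (so `μ_{−1} = 0`). -/
noncomputable def mu (n : ℕ) (s : ℤ) : ℤ := C n s - C n (s - 1)

/-- A finset `β = {b₁ < b₂ < … < b_m}` of naturals is *standard* if `bᵢ ≥ 2i` for all `i`. -/
def IsStandard (β : Finset ℕ) : Prop :=
  ∀ i < β.card, 2 * (i + 1) ≤ (β.sort (· ≤ ·)).getD i 0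

/-- The standard `k`-element subsets of `{1,…,n}`. -/
noncomputable def stdSets (n k : ℕ) : Finset (Finset ℕ) :=
  (Finset.Icc 1 n).powerset.filter fun β => IsStandard β ∧ β.card = k

/-- The standard inclusion matrix `W_{i,j}`. -/
noncomputable def W (n i j : ℕ) : Matrix ↥(stdSets n i) ↥(stdSets n j) ℤ :=
  Matrix.of fun α β => if (α : Finset ℕ) ⊆ (β : Finset ℕ) then 1 else 0

/-- The `μ_i × μ_j` diagonal matrix `D_{i,j}` whose `(t,t)` entry is `C(j−s,i−s)`
for the unique `s` with `μ_{s−1} ≤ t < μ_s`. -/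
noncomputable def Dmat (n i j : ℕ) :
    Matrix (Fin (mu n i).toNat) (Fin (mu n j).toNat) ℤ :=
  Matrix.of fun t u =>
    if (t : ℕ) = (u : ℕ) then
      ∑ s ∈ Finset.range (i + 1),
        if mu n ((s : ℤ) - 1) ≤ ((t : ℕ) : ℤ) ∧ ((t : ℕ) : ℤ) < mu n s then
          ((j - s).choose (i - s) : ℤ)
        else 0
    else 0

theorem isStandard_iff (β : Finset ℕ) :
    IsStandard β ↔ ∀ t, 2 * (β.filter (· ≤ t)).card ≤ t := by
  have hlen : (β.sort (· ≤ ·)).length = β.card := Finset.length_sort _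
  have hmono : ∀ a b (ha : a < (β.sort (· ≤ ·)).length) (hb : b < (β.sort (· ≤ ·)).length),
      a ≤ b → (β.sort (· ≤ ·))[a] ≤ (β.sort (· ≤ ·))[b] := by
    intro a b ha hb hab
    rcases hab.eq_or_lt with h | h
    · subst h; exact le_rfl
    · exact List.pairwise_iff_getElem.mp (Finset.pairwise_sort β (· ≤ ·)) a b ha hb h
  constructor
  · intro h t
    by_contra hlt
    push Not at hlt
    set k := (β.filter (· ≤ t)).card with hk
    have hkpos : 0 < k := by omega
    have hkle : k ≤ β.card := Finset.card_filter_le _ _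
    have h1 := h (k - 1) (by omega)
    have hk1 : k - 1 < (β.sort (· ≤ ·)).length := by omega
    rw [List.getD_eq_getElem _ _ hk1] at h1
    have hsub : β.filter (· ≤ t) ⊆
        (Finset.range (k - 1)).image (fun i => (β.sort (· ≤ ·)).getD i 0) := by
      intro b hb
      rw [Finset.mem_filter] at hb
      have hb' : b ∈ β.sort (· ≤ ·) := (Finset.mem_sort _).2 hb.1
      obtain ⟨i, hi, rfl⟩ := List.getElem_of_mem hb'
      rw [Finset.mem_image]
      refine ⟨i, ?_, List.getD_eq_getElem _ _ hi⟩
      rw [Finset.mem_range]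
      by_contra hge
      have := hmono (k-1) i hk1 hi (by omega)
      omega
    have := (Finset.card_le_card hsub).trans Finset.card_image_le
    rw [Finset.card_range] at this
    omega
  · intro h i hi
    have hi' : i < (β.sort (· ≤ ·)).length := by omega
    rw [List.getD_eq_getElem _ _ hi']
    refine le_trans ?_ (h _)
    have hsub : (Finset.range (i + 1)).image (fun i => (β.sort (· ≤ ·)).getD i 0) ⊆
        β.filter (· ≤ (β.sort (· ≤ ·))[i]) := by
      intro b hb
      rw [Finset.mem_image] at hb
      obtain ⟨a, ha, rfl⟩ := hb
      rw [Finset.mem_range] at ha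
      have ha' : a < (β.sort (· ≤ ·)).length := by omega
      rw [List.getD_eq_getElem _ _ ha', Finset.mem_filter]
      exact ⟨(Finset.mem_sort (· ≤ ·)).1 (List.getElem_mem ha'), hmono a i ha' hi' (by omega)⟩
    have h2 := Finset.card_le_card hsub
    rw [Finset.card_image_of_injOn, Finset.card_range] at h2
    · omega
    · intro a ha b hb hab
      simp only [Finset.coe_range, Set.mem_Iio] at ha hb
      have ha' : a < (β.sort (· ≤ ·)).length := by omega
      have hb' : b < (β.sort (· ≤ ·)).length := by omega
      simp only [List.getD_eq_getElem _ _ ha', List.getD_eq_getElem _ _ hb'] at hab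
      exact (List.Nodup.getElem_inj_iff (Finset.sort_nodup β (· ≤ ·))).1 hab

theorem isStandard_mono {α β : Finset ℕ} (h : α ⊆ β) (hβ : IsStandard β) : IsStandard α := by
  rw [isStandard_iff] at *
  intro t
  have := Finset.card_le_card (Finset.filter_subset_filter (· ≤ t) h)
  have := hβ t
  omega

/-- `d`-subsets of `{1,…,n}` whose lattice path stays in the strip `[0,K]`. -/
noncomputable def strip (K n d : ℕ) : Finset (Finset ℕ) :=
  ((Finset.Icc 1 n).powersetCard d).filter fun β =>
    ∀ t ≤ n, 2 * (β.filter (· ≤ t)).card ≤ t ∧ t ≤ 2 * (β.filter (· ≤ t)).card + K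

theorem filter_self {n : ℕ} {β : Finset ℕ} (h : β ⊆ Finset.Icc 1 n) :
    β.filter (· ≤ n) = β := by
  apply Finset.filter_true_of_mem
  intro b hb
  exact (Finset.mem_Icc.1 (h hb)).2

theorem strip_empty {K n d : ℕ} (h : n < 2 * d ∨ 2 * d + K < n) : strip K n d = ∅ := by
  apply Finset.eq_empty_of_forall_notMem
  intro β hβ
  rw [strip, Finset.mem_filter, Finset.mem_powersetCard] at hβ
  have := hβ.2 n le_rfl
  rw [filter_self hβ.1.1, hβ.1.2] at this
  omega

theorem strip_zero {K n : ℕ} (h : n ≤ K) : strip K n 0 = {∅} := by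
  ext β
  simp only [strip, Finset.mem_filter, Finset.mem_powersetCard, Finset.card_eq_zero,
    Finset.mem_singleton]
  constructor
  · rintro ⟨⟨-, h⟩, -⟩; exact h
  · rintro rfl
    refine ⟨⟨by simp, rfl⟩, ?_⟩
    intro t ht
    simp
    omega

theorem strip_succ {K n d : ℕ} (h1 : 2 * (d + 1) ≤ n + 1) (h2 : n + 1 ≤ 2 * (d + 1) + K) :
    (strip K (n + 1) (d + 1)).card = (strip K n (d + 1)).card + (strip K n d).card := by
  have hnot : ∀ {β : Finset ℕ}, β ⊆ Finset.Icc 1 n → n + 1 ∉ β := by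
    intro β hβ hn
    have := Finset.mem_Icc.1 (hβ hn)
    omega
  have key : strip K (n + 1) (d + 1) =
      strip K n (d + 1) ∪ (strip K n d).image (insert (n + 1)) := by
    have hfi : ∀ (β : Finset ℕ) t, t ≤ n →
        (insert (n + 1) β).filter (· ≤ t) = β.filter (· ≤ t) := by
      intro β t ht
      rw [Finset.filter_insert, if_neg (by omega)]
    ext β
    simp only [strip, Finset.mem_filter, Finset.mem_powersetCard, Finset.mem_union,
      Finset.mem_image]
    constructor
    · rintro ⟨⟨hs, hc⟩, hp⟩
      by_cases hn : n + 1 ∈ β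
      · right
        refine ⟨β.erase (n + 1), ⟨⟨?_, ?_⟩, ?_⟩, Finset.insert_erase hn⟩
        · intro b hb
          have h3 := Finset.mem_Icc.1 (hs (Finset.mem_of_mem_erase hb))
          have h4 := Finset.ne_of_mem_erase hb
          rw [Finset.mem_Icc]; omega
        · rw [Finset.card_erase_of_mem hn]; omega
        · intro t ht
          rw [← hfi _ t ht, Finset.insert_erase hn]
          exact hp t (by omega)
      · left
        refine ⟨⟨?_, hc⟩, fun t ht => hp t (by omega)⟩
        intro b hb
        have h3 := Finset.mem_Icc.1 (hs hb)
        have : b ≠ n + 1 := fun h => hn (h ▸ hb)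
        rw [Finset.mem_Icc]; omega
    · have hI : Finset.Icc 1 n ⊆ Finset.Icc 1 (n + 1) :=
        Finset.Icc_subset_Icc le_rfl (by omega)
      rintro (⟨⟨hs, hc⟩, hp⟩ | ⟨γ, ⟨⟨hs, hc⟩, hp⟩, rfl⟩)
      · refine ⟨⟨hs.trans hI, hc⟩, ?_⟩
        intro t ht
        rcases Nat.lt_or_ge n t with h | h
        · obtain rfl : t = n + 1 := by omega
          rw [filter_self (hs.trans hI), hc]; omega
        · exact hp t h
      · have hs' : insert (n + 1) γ ⊆ Finset.Icc 1 (n + 1) := by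
          apply Finset.insert_subset _ (hs.trans hI)
          rw [Finset.mem_Icc]; omega
        have hc' : (insert (n + 1) γ).card = d + 1 := by
          rw [Finset.card_insert_of_notMem (hnot hs), hc]
        refine ⟨⟨hs', hc'⟩, ?_⟩
        intro t ht
        rcases Nat.lt_or_ge n t with h | h
        · obtain rfl : t = n + 1 := by omega
          rw [filter_self hs', hc']; omega
        · rw [hfi _ t h]; exact hp t h
  have hsub : ∀ {d}, ∀ β ∈ strip K n d, β ⊆ Finset.Icc 1 n := by
    intro d β hβ
    rw [strip, Finset.mem_filter, Finset.mem_powersetCard] at hβ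
    exact hβ.1.1
  rw [key, Finset.card_union_of_disjoint, Finset.card_image_of_injOn]
  · intro a ha b hb hab
    rw [← Finset.erase_insert (hnot (hsub a ha)), ← Finset.erase_insert (hnot (hsub b hb))]
    exact congrArg (fun s => Finset.erase s (n + 1)) hab
  · rw [Finset.disjoint_left]
    intro a ha hb
    obtain ⟨γ, -, rfl⟩ := Finset.mem_image.1 hb
    exact hnot (hsub _ ha) (Finset.mem_insert_self _ _)

theorem strip_card (K n : ℕ) : ∀ d, d ≤ K + 1 → 2 * d ≤ n + 1 → n ≤ 2 * d + K + 1 →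
    ((strip K n d).card : ℤ) = n.choose d - (if d = 0 then 0 else (n.choose (d - 1) : ℤ))
      - n.choose (d + K + 1) + n.choose (d + K + 2) := by
  induction n with
  | zero =>
    intro d h1 h2 h3
    obtain rfl : d = 0 := by omega
    rw [strip_zero (by omega)]
    simp [Nat.choose_eq_zero_of_lt]
  | succ n ih =>
    intro d h1 h2 h3
    by_cases hlo : n + 1 < 2 * d
    · rw [strip_empty (Or.inl hlo)]
      rw [if_neg (by omega), Nat.choose_eq_zero_of_lt (by omega : n + 1 < d + K + 1),
        Nat.choose_eq_zero_of_lt (by omega : n + 1 < d + K + 2),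
        Nat.choose_symm_of_eq_add (by omega : n + 1 = d + (d - 1))]
      simp
    by_cases hhi : 2 * d + K < n + 1
    · rw [strip_empty (Or.inr hhi)]
      rw [Nat.choose_symm_of_eq_add (by omega : n + 1 = d + (d + K + 1))]
      by_cases hd : d = 0
      · rw [if_pos hd, Nat.choose_eq_zero_of_lt (by omega : n + 1 < d + K + 2)]
        simp
      · rw [if_neg hd, Nat.choose_symm_of_eq_add (by omega : n + 1 = (d - 1) + (d + K + 2))]
        simp
    rcases d with _ | d
    · rw [strip_zero (by omega), Nat.choose_eq_zero_of_lt (by omega : n + 1 < 0 + K + 1),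
        Nat.choose_eq_zero_of_lt (by omega : n + 1 < 0 + K + 2)]
      simp
    · rw [strip_succ (by omega) (by omega)]
      push_cast
      rw [ih (d + 1) (by omega) (by omega) (by omega), ih d (by omega) (by omega) (by omega)]
      have e1 : d + 1 + K + 1 = (d + K + 1) + 1 := by ring
      have e2 : d + 1 + K + 2 = (d + K + 2) + 1 := by ring
      rw [e1, e2, Nat.choose_succ_succ n d, Nat.choose_succ_succ n (d + K + 1),
        Nat.choose_succ_succ n (d + K + 2)]
      rcases d with _ | d
      · simp; ring
      · have e3 : d + 1 + 1 - 1 = d + 1 := rfl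
        have e4 : d + 1 - 1 = d := rfl
        rw [if_neg (by omega), if_neg (by omega), e3, e4,
          Nat.choose_succ_succ n d]
        push_cast
        ring

theorem mu_eq (n d : ℕ) (h : d ≤ n) :
    mu n d = n.choose d - (if d = 0 then 0 else (n.choose (d - 1) : ℤ)) := by
  unfold mu C
  rw [if_pos (by omega)]
  by_cases hd : d = 0
  · subst hd; simp
  · rw [if_neg hd, if_pos (by omega)]
    have : ((d : ℤ) - 1).toNat = d - 1 := by omega
    rw [this]; simp

theorem stdSets_eq (n d : ℕ) : stdSets n d = strip n n d := by
  ext β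
  simp only [stdSets, strip, Finset.mem_filter, Finset.mem_powersetCard, Finset.mem_powerset,
    isStandard_iff]
  constructor
  · rintro ⟨h1, h2, h3⟩
    exact ⟨⟨h1, h3⟩, fun t ht => ⟨h2 t, by omega⟩⟩
  · rintro ⟨⟨h1, h2⟩, h3⟩
    refine ⟨h1, ?_, h2⟩
    intro t
    rcases le_total t n with h | h
    · exact (h3 t h).1
    · have h4 := (h3 n le_rfl).1
      rw [filter_self h1] at h4
      have := Finset.card_filter_le β (· ≤ t)
      omega

theorem stdSets_card (n s : ℕ) (h : 3 * s ≤ n + 1) : ((stdSets n s).card : ℤ) = mu n s := by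
  rw [stdSets_eq, strip_card _ _ _ (by omega) (by omega) (by omega), mu_eq _ _ (by omega),
    Nat.choose_eq_zero_of_lt (by omega : n < s + n + 1),
    Nat.choose_eq_zero_of_lt (by omega : n < s + n + 2)]
  simp

/-- reverse standard -/
def RevStd (n : ℕ) (γ : Finset ℕ) : Prop :=
  ∀ t ≤ n, 2 * (γ.filter (t < ·)).card ≤ n - t

/-- standard and reverse standard `d`-sets -/
noncomputable def biStd (n d : ℕ) : Finset (Finset ℕ) :=
  (stdSets n d).filter (RevStd n)

theorem biStd_eq (n d : ℕ) (h : 2 * d ≤ n) : biStd n d = strip (n - 2 * d) n d := by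
  ext β
  simp only [biStd, stdSets_eq, strip, Finset.mem_filter, Finset.mem_powersetCard, RevStd]
  have hsum : ∀ t, (β.filter (· ≤ t)).card + (β.filter (t < ·)).card = β.card := by
    intro t
    have := Finset.card_filter_add_card_filter_not (s := β) (· ≤ t)
    simpa only [not_le] using this
  constructor
  · rintro ⟨⟨⟨h1, h2⟩, h3⟩, h4⟩
    refine ⟨⟨h1, h2⟩, fun t ht => ⟨(h3 t ht).1, ?_⟩⟩
    have := h4 t ht
    have := hsum t
    omega
  · rintro ⟨⟨h1, h2⟩, h3⟩
    refine ⟨⟨⟨h1, h2⟩, fun t ht => ⟨(h3 t ht).1, by omega⟩⟩, fun t ht => ?_⟩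
    have := h3 t ht
    have := hsum t
    omega

theorem biStd_card (n d : ℕ) (h : 3 * d ≤ n + 1) :
    ((biStd n d).card : ℤ) = mu n d - mu n ((d : ℤ) - 1) := by
  rw [biStd_eq _ _ (by omega), strip_card _ _ _ (by omega) (by omega) (by omega),
    mu_eq _ _ (by omega)]
  rcases d with _ | d
  · simp [mu, C, Nat.choose_eq_zero_of_lt]
  · have e : ((d + 1 : ℕ) : ℤ) - 1 = (d : ℤ) := by push_cast; ring
    rw [e, mu_eq _ _ (by omega)]
    rw [← Nat.choose_symm_of_eq_add (by omega : n = d + (d + 1 + (n - 2 * (d + 1)) + 1))]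
    rcases d with _ | d
    · rw [Nat.choose_eq_zero_of_lt (by omega : n < 0 + 1 + (n - 2 * (0 + 1)) + 2)]
      simp
    · rw [← Nat.choose_symm_of_eq_add
        (by omega : n = d + (d + 1 + 1 + (n - 2 * (d + 1 + 1)) + 2))]
      simp
      ring

theorem card_between (β δ : Finset ℕ) (h : β ⊆ δ) (d : ℕ) (hd : β.card ≤ d) :
    ((δ.powersetCard d).filter (β ⊆ ·)).card = (δ.card - β.card).choose (d - β.card) := by
  rw [← Finset.card_sdiff_of_subset h, ← Finset.card_powersetCard]
  symm
  apply Finset.card_bij (fun γ _ => γ ∪ β)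
  · intro γ hγ
    rw [Finset.mem_powersetCard] at hγ
    rw [Finset.mem_filter, Finset.mem_powersetCard]
    refine ⟨⟨Finset.union_subset (hγ.1.trans Finset.sdiff_subset) h, ?_⟩,
      Finset.subset_union_right⟩
    rw [Finset.card_union_of_disjoint, hγ.2]
    · omega
    · exact Finset.disjoint_of_subset_left hγ.1 Finset.sdiff_disjoint
  · intro a ha b hb hab
    rw [Finset.mem_powersetCard] at ha hb
    have h1 := Finset.disjoint_of_subset_left ha.1 Finset.sdiff_disjoint
    have h2 := Finset.disjoint_of_subset_left hb.1 Finset.sdiff_disjoint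
    rw [← Finset.union_sdiff_cancel_right h1, ← Finset.union_sdiff_cancel_right h2]
    exact congrArg (· \ β) hab
  · intro γ hγ
    rw [Finset.mem_filter, Finset.mem_powersetCard] at hγ
    refine ⟨γ \ β, ?_, Finset.sdiff_union_of_subset hγ.2⟩
    rw [Finset.mem_powersetCard]
    refine ⟨Finset.sdiff_subset_sdiff hγ.1.1 le_rfl, ?_⟩
    rw [Finset.card_sdiff_of_subset hγ.2, hγ.1.2]

theorem incl_excl {A : Type*} [AddCommGroup A] (Q : AddSubgroup A) (G : Finset ℕ) (d : ℕ)
    (x : Finset ℕ → A) (hG : G.card < 2 * d)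
    (hrel : ∀ β ⊆ G, β.card < d → ∑ γ ∈ (G.powersetCard d).filter (β ⊆ ·), x γ ∈ Q)
    (α : Finset ℕ) (hα : α ⊆ G) (hc : α.card = d) : x α ∈ Q := by
  have hB : (G \ α).card < d := by
    rw [Finset.card_sdiff_of_subset hα]; omega
  have key : x α = ∑ β ∈ (G \ α).powerset, ((-1 : ℤ) ^ β.card) •
      ∑ γ ∈ (G.powersetCard d).filter (β ⊆ ·), x γ := by
    simp_rw [Finset.smul_sum, Finset.sum_filter]
    rw [Finset.sum_comm]
    have : ∀ γ ∈ G.powersetCard d, ∑ β ∈ (G \ α).powerset,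
        (if β ⊆ γ then ((-1 : ℤ) ^ β.card) • x γ else 0) = if γ = α then x γ else 0 := by
      intro γ hγ
      rw [Finset.mem_powersetCard] at hγ
      rw [← Finset.sum_filter, ← Finset.sum_smul]
      have e : (G \ α).powerset.filter (· ⊆ γ) = ((G \ α) ∩ γ).powerset := by
        ext β
        simp only [Finset.mem_filter, Finset.mem_powerset, Finset.subset_inter_iff]
      rw [e, Finset.sum_powerset_neg_one_pow_card]
      by_cases hh : γ = α
      · subst hh
        simp
      · rw [if_neg hh, if_neg, zero_smul]
        intro h0
        apply hh
        apply Finset.eq_of_subset_of_card_le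
        · intro b hb
          by_contra hba
          have : b ∈ (G \ α) ∩ γ := by
            rw [Finset.mem_inter, Finset.mem_sdiff]
            exact ⟨⟨hγ.1 hb, hba⟩, hb⟩
          rw [h0] at this
          simp at this
        · omega
    rw [Finset.sum_congr rfl this, Finset.sum_ite_eq', if_pos]
    rw [Finset.mem_powersetCard]; exact ⟨hα, hc⟩
  rw [key]
  apply AddSubgroup.sum_mem
  intro β hβ
  rw [Finset.mem_powerset] at hβ
  apply AddSubgroup.zsmul_mem
  exact hrel β (hβ.trans Finset.sdiff_subset) (lt_of_le_of_lt (Finset.card_le_card hβ) hB)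

theorem straighten {A : Type*} [AddCommGroup A] (Q : AddSubgroup A) (n : ℕ) :
    ∀ (k m d : ℕ) (x : Finset ℕ → A), m + k = n →
    (∀ β ⊆ Finset.Ioc m n, β.card < d →
      ∑ γ ∈ ((Finset.Ioc m n).powersetCard d).filter (β ⊆ ·), x γ ∈ Q) →
    (∀ γ ⊆ Finset.Ioc m n, γ.card = d → RevStd n γ → x γ ∈ Q) →
    ∀ α ⊆ Finset.Ioc m n, α.card = d → x α ∈ Q := by
  intro k
  induction k with
  | zero =>
    intro m d x hm hrel hstd α hα hc
    obtain rfl : m = n := by omega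
    have h0 : α = ∅ := by simpa using hα
    apply hstd α hα hc
    intro t ht
    rw [h0]; simp
  | succ k ih =>
    intro m d x hm hrel hstd
    rcases Nat.lt_or_ge (k + 1) (2 * d) with hd | hd
    · intro α hα hc
      apply incl_excl Q (Finset.Ioc m n) d x _ hrel α hα hc
      rw [Nat.card_Ioc]; omega
    have hG : Finset.Ioc m n = insert (m + 1) (Finset.Ioc (m + 1) n) := by
      ext b
      simp only [Finset.mem_insert, Finset.mem_Ioc]
      omega
    have hG' : Finset.Ioc (m + 1) n ⊆ Finset.Ioc m n := by
      rw [hG]; exact Finset.subset_insert _ _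
    have he : m + 1 ∉ Finset.Ioc (m + 1) n := by simp
    rcases d with _ | d
    · intro α hα hc
      apply hstd α hα hc
      intro t ht
      rw [Finset.card_eq_zero] at hc
      rw [hc]; simp
    have hpc : ∀ f : Finset ℕ → A, ∑ γ ∈ (Finset.Ioc m n).powersetCard (d + 1), f γ =
        ∑ γ ∈ (Finset.Ioc (m + 1) n).powersetCard (d + 1), f γ +
        ∑ γ ∈ (Finset.Ioc (m + 1) n).powersetCard d, f (insert (m + 1) γ) := by
      intro f
      rw [hG, Finset.powersetCard_succ_insert he, Finset.sum_union, Finset.sum_image]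
      · intro a ha b hb hab
        have ha' := (Finset.mem_powersetCard.1 ha).1
        have hb' := (Finset.mem_powersetCard.1 hb).1
        rw [← Finset.erase_insert (fun h => he (ha' h)), ← Finset.erase_insert (fun h => he (hb' h))]
        exact congrArg (fun s => Finset.erase s (m + 1)) hab
      · rw [Finset.disjoint_left]
        intro a ha hb
        obtain ⟨γ, -, rfl⟩ := Finset.mem_image.1 hb
        exact he ((Finset.mem_powersetCard.1 ha).1 (Finset.mem_insert_self _ _))
    have hA : ∀ α ⊆ Finset.Ioc (m + 1) n, α.card = d → x (insert (m + 1) α) ∈ Q := by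
      apply ih (m + 1) d (fun γ => x (insert (m + 1) γ)) (by omega)
      · intro β hβ hc
        have h1 := hrel (insert (m + 1) β) (by rw [hG]; exact Finset.insert_subset_insert _ hβ)
          (by rw [Finset.card_insert_of_notMem (fun h => he (hβ h))]; omega)
        rw [Finset.sum_filter, hpc] at h1
        rw [Finset.sum_filter]
        rw [Finset.sum_eq_zero (s := (Finset.Ioc (m + 1) n).powersetCard (d + 1)), zero_add] at h1
        · convert h1 using 1
          apply Finset.sum_congr rfl
          intro γ hγ
          have : insert (m + 1) β ⊆ insert (m + 1) γ ↔ β ⊆ γ :=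
            Finset.insert_subset_insert_iff (fun h => he (hβ h))
          simp only [this]
        · intro γ hγ
          have hγ' := (Finset.mem_powersetCard.1 hγ).1
          rw [if_neg]
          intro h
          exact he (hγ' (h (Finset.mem_insert_self _ _)))
      · intro γ hγ hc hr
        have hcard : (insert (m + 1) γ).card = d + 1 := by
          rw [Finset.card_insert_of_notMem (fun h => he (hγ h)), hc]
        apply hstd _ (by rw [hG]; exact Finset.insert_subset_insert _ hγ) hcard
        intro t ht
        rcases Nat.lt_or_ge t (m + 1) with h | h
        · have := Finset.card_filter_le (insert (m + 1) γ) (t < ·)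
          omega
        · rw [Finset.filter_insert, if_neg (by omega)]
          exact hr t ht
    have hB : ∀ α ⊆ Finset.Ioc (m + 1) n, α.card = d + 1 → x α ∈ Q := by
      apply ih (m + 1) (d + 1) x (by omega)
      · intro β hβ hc
        have h1 := hrel β (hβ.trans hG') hc
        rw [Finset.sum_filter, hpc] at h1
        rw [Finset.sum_filter]
        refine (AddSubgroup.add_mem_cancel_right Q ?_).1 h1
        apply AddSubgroup.sum_mem
        intro γ hγ
        rw [Finset.mem_powersetCard] at hγ
        split_ifs
        · exact hA γ hγ.1 hγ.2
        · exact Q.zero_mem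
      · intro γ hγ hc hr
        exact hstd γ (hγ.trans hG') hc hr
    intro α hα hc
    by_cases hm1 : m + 1 ∈ α
    · rw [← Finset.insert_erase hm1]
      apply hA
      · rw [← Finset.subset_insert_iff, ← hG]; exact hα
      · rw [Finset.card_erase_of_mem hm1]; omega
    · apply hB α _ hc
      rw [hG] at hα
      exact (Finset.subset_insert_iff_of_notMem hm1).1 hα

/-- indicator of containing `γ`, as a function on standard `j`-sets -/
noncomputable def xf (n j : ℕ) (γ : Finset ℕ) : ↥(stdSets n j) → ℤ :=
  fun β => if γ ⊆ (β : Finset ℕ) then 1 else 0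

theorem mem_stdSets {n j : ℕ} {β : Finset ℕ} :
    β ∈ stdSets n j ↔ β ⊆ Finset.Icc 1 n ∧ IsStandard β ∧ β.card = j := by
  simp [stdSets]

theorem span_xf (n j : ℕ) (Q : AddSubgroup (↥(stdSets n j) → ℤ))
    (hQ : ∀ d ≤ j, ∀ γ ∈ biStd n d, xf n j γ ∈ Q) :
    ∀ d ≤ j, ∀ α ⊆ Finset.Icc 1 n, α.card = d → xf n j α ∈ Q := by
  have hI : Finset.Icc 1 n = Finset.Ioc 0 n := by
    ext b; simp only [Finset.mem_Icc, Finset.mem_Ioc]; omega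
  intro d
  induction d using Nat.strong_induction_on with
  | _ d ih =>
    intro hd
    rw [hI]
    apply straighten Q n n 0 d (xf n j) (by omega)
    · intro β hβ hc
      have : ∑ γ ∈ ((Finset.Ioc 0 n).powersetCard d).filter (β ⊆ ·), xf n j γ =
          ((j - β.card).choose (d - β.card) : ℤ) • xf n j β := by
        ext δ
        obtain ⟨hδ1, hδ2, hδ3⟩ := mem_stdSets.1 δ.2
        rw [Finset.sum_apply, Pi.smul_apply]
        unfold xf
        rw [← Finset.sum_filter]
        by_cases hb : β ⊆ (δ : Finset ℕ)
        · have e : (((Finset.Ioc 0 n).powersetCard d).filter (β ⊆ ·)).filter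
              (· ⊆ (δ : Finset ℕ)) = ((δ : Finset ℕ).powersetCard d).filter (β ⊆ ·) := by
            ext γ
            simp only [Finset.mem_filter, Finset.mem_powersetCard]
            constructor
            · rintro ⟨⟨⟨h1, h2⟩, h3⟩, h4⟩; exact ⟨⟨h4, h2⟩, h3⟩
            · rintro ⟨⟨h1, h2⟩, h3⟩
              exact ⟨⟨⟨hI ▸ (h1.trans hδ1), h2⟩, h3⟩, h1⟩
          rw [e, Finset.sum_const, card_between _ _ hb _ hc.le, if_pos hb, hδ3]
          simp
        · rw [if_neg hb, Finset.sum_eq_zero]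
          · simp
          · intro γ hγ
            simp only [Finset.mem_filter] at hγ
            exact absurd (hγ.1.2.trans hγ.2) hb
      rw [this]
      exact AddSubgroup.zsmul_mem _ (ih _ hc (by omega) β (hI ▸ hβ) rfl) _
    · intro γ hγ hc hr
      by_cases hs : IsStandard γ
      · apply hQ d hd
        rw [biStd, Finset.mem_filter, mem_stdSets]
        exact ⟨⟨hI ▸ hγ, hs, hc⟩, hr⟩
      · convert Q.zero_mem
        ext δ
        unfold xf
        rw [if_neg]
        · rfl
        · intro h
          exact hs (isStandard_mono h (mem_stdSets.1 δ.2).2.1)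

theorem sum_between (n i j : ℕ) (γ δ : Finset ℕ) (hγ : γ.card ≤ i) (hδ : δ ∈ stdSets n j) :
    ∑ α : ↥(stdSets n i), (if γ ⊆ (α : Finset ℕ) then (1 : ℤ) else 0) *
      (if (α : Finset ℕ) ⊆ δ then 1 else 0) =
    ((j - γ.card).choose (i - γ.card) : ℤ) * (if γ ⊆ δ then 1 else 0) := by
  obtain ⟨hδ1, hδ2, hδ3⟩ := mem_stdSets.1 hδ
  rw [Finset.sum_coe_sort (stdSets n i) (fun α => (if γ ⊆ α then (1 : ℤ) else 0) *
      (if α ⊆ δ then 1 else 0))]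
  have e0 : ∀ α ∈ stdSets n i, (if γ ⊆ α then (1 : ℤ) else 0) * (if α ⊆ δ then 1 else 0) =
      if γ ⊆ α ∧ α ⊆ δ then 1 else 0 := by
    intro α _
    split_ifs <;> simp_all
  rw [Finset.sum_congr rfl e0, ← Finset.sum_filter]
  by_cases hb : γ ⊆ δ
  · have e : (stdSets n i).filter (fun α => γ ⊆ α ∧ α ⊆ δ) =
        (δ.powersetCard i).filter (γ ⊆ ·) := by
      ext α
      simp only [Finset.mem_filter, Finset.mem_powersetCard, mem_stdSets]
      constructor
      · rintro ⟨⟨h1, h2, h3⟩, h4, h5⟩; exact ⟨⟨h5, h3⟩, h4⟩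
      · rintro ⟨⟨h1, h2⟩, h3⟩
        exact ⟨⟨h1.trans hδ1, isStandard_mono h1 hδ2, h2⟩, h3, h1⟩
    rw [e, Finset.sum_const, card_between _ _ hb _ hγ, if_pos hb, hδ3]
    simp
  · rw [if_neg hb, Finset.sum_eq_zero]
    · simp
    · intro α hα
      simp only [Finset.mem_filter] at hα
      exact absurd (hα.2.1.trans hα.2.2) hb

/-- number of bistandard sets of size less than `d` -/
noncomputable def cum (n d : ℕ) : ℕ := ∑ k ∈ Finset.range d, (biStd n k).card

theorem cum_succ (n d : ℕ) : cum n (d + 1) = cum n d + (biStd n d).card :=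
  Finset.sum_range_succ _ _

theorem cum_mono (n : ℕ) : Monotone (cum n) :=
  monotone_nat_of_le_succ fun d => by rw [cum_succ]; omega

theorem cum_mu' (n d : ℕ) (h : 3 * d ≤ n + 1) : (cum n (d + 1) : ℤ) = mu n d := by
  induction d with
  | zero =>
    have := biStd_card n 0 (by omega)
    rw [cum_succ]
    push_cast
    rw [this]
    simp [cum, mu, C]
  | succ d ih =>
    rw [cum_succ]
    push_cast
    rw [ih (by omega)]
    have := biStd_card n (d + 1) h
    rw [this]
    push_cast
    rw [add_sub_cancel_right]
    ring

theorem cum_mu (n d : ℕ) (h : 3 * d ≤ n + 1) : (cum n d : ℤ) = mu n ((d : ℤ) - 1) := by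
  have h1 := cum_mu' n d h
  have h2 := biStd_card n d h
  rw [cum_succ] at h1
  push_cast at h1
  omega

theorem exists_enum (n : ℕ) : ∃ g : ℕ → Finset ℕ,
    (∀ d t, cum n d ≤ t → t < cum n (d + 1) → g t ∈ biStd n d) ∧
    (∀ d, ∀ γ ∈ biStd n d, ∃ t < cum n (d + 1), g t = γ) := by
  let σ : ℕ → ℕ := fun t => sInf {d | t < cum n (d + 1)}
  have hσ : ∀ d t, cum n d ≤ t → t < cum n (d + 1) → σ t = d := by
    intro d t h1 h2
    apply le_antisymm
    · exact Nat.sInf_le h2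
    · by_contra hlt
      push Not at hlt
      have h3 : t < cum n (σ t + 1) := Nat.sInf_mem (s := {d | t < cum n (d + 1)}) ⟨d, h2⟩
      have h4 : cum n (σ t + 1) ≤ cum n d := cum_mono n hlt
      omega
  refine ⟨fun t => (biStd n (σ t)).toList.getD (t - cum n (σ t)) ∅, ?_, ?_⟩
  · intro d t h1 h2
    have h3 : t - cum n d < (biStd n d).toList.length := by
      rw [cum_succ] at h2
      rw [Finset.length_toList]; omega
    simp only [hσ d t h1 h2]
    rw [List.getD_eq_getElem _ _ h3, ← Finset.mem_toList]
    exact List.getElem_mem h3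
  · intro d γ hγ
    rw [← Finset.mem_toList] at hγ
    obtain ⟨i, hi, rfl⟩ := List.getElem_of_mem hγ
    have hi' := hi
    rw [Finset.length_toList] at hi'
    have h2 : cum n d + i < cum n (d + 1) := by rw [cum_succ]; omega
    refine ⟨cum n d + i, h2, ?_⟩
    simp only [hσ d _ (Nat.le_add_right _ _) h2, Nat.add_sub_cancel_left]
    exact List.getD_eq_getElem _ _ hi

theorem exists_level (n i t : ℕ) (h : t < cum n (i + 1)) :
    ∃ d ≤ i, cum n d ≤ t ∧ t < cum n (d + 1) := by
  induction i with
  | zero => exact ⟨0, le_rfl, by simp [cum], h⟩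
  | succ i ih =>
    rcases Nat.lt_or_ge t (cum n (i + 1)) with h1 | h1
    · obtain ⟨d, hd, h2⟩ := ih h1
      exact ⟨d, by omega, h2⟩
    · exact ⟨i + 1, le_rfl, h1, h⟩

/-- There are exactly `μ_s` standard `s`-subsets, and there is a family `E_s` of
unimodular matrices simultaneously diagonalizing all the `W_{i,j}`:
`E_i · W_{i,j} = D_{i,j} · E_j`. -/
theorem statement8 (n : ℕ) :
    (∀ s : ℕ, 3 * s ≤ n + 1 → ((stdSets n s).card : ℤ) = mu n s) ∧
    ∃ E : (s : ℕ) → Matrix (Fin (mu n s).toNat) ↥(stdSets n s) ℤ,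
      (∀ s : ℕ, 3 * s ≤ n + 1 →
        Function.Bijective fun v : Fin (mu n s).toNat → ℤ => Matrix.vecMul v (E s)) ∧
      (∀ i j : ℕ, i ≤ j → 3 * j ≤ n + 1 →
        E i * W n i j = Dmat n i j * E j) := by
  refine ⟨fun s hs => stdSets_card n s hs, ?_⟩
  obtain ⟨g, hg1, hg2⟩ := exists_enum n
  refine ⟨fun s => Matrix.of fun t β => xf n s (g t) β, ?_, ?_⟩
  · intro s hs
    have hcard : Fintype.card (Fin (mu n s).toNat) = Fintype.card ↥(stdSets n s) := by
      rw [Fintype.card_fin, Fintype.card_coe, ← stdSets_card n s hs, Int.toNat_natCast]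
    set E : Matrix (Fin (mu n s).toNat) ↥(stdSets n s) ℤ :=
      Matrix.of fun t β => xf n s (g t) β with hE
    have hsurj : Function.Surjective E.vecMulLinear := by
      have hgen : ∀ d ≤ s, ∀ γ ∈ biStd n d,
          xf n s γ ∈ (LinearMap.range E.vecMulLinear).toAddSubgroup := by
        intro d hd γ hγ
        obtain ⟨t, ht, rfl⟩ := hg2 d γ hγ
        have ht' : t < (mu n s).toNat := by
          rw [← cum_mu' n s hs, Int.toNat_natCast]
          exact lt_of_lt_of_le ht (cum_mono n (by omega))
        refine ⟨Pi.single ⟨t, ht'⟩ 1, ?_⟩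
        rw [Matrix.vecMulLinear_apply, Matrix.single_one_vecMul]
        rfl
      have hall := span_xf n s _ hgen s le_rfl
      intro v
      have hv : v = ∑ β : ↥(stdSets n s), v β • xf n s (β : Finset ℕ) := by
        ext δ
        rw [Finset.sum_apply, Finset.sum_eq_single δ]
        · simp [xf]
        · intro β _ hne
          rw [Pi.smul_apply]
          unfold xf
          rw [if_neg, smul_zero]
          intro hsub
          apply hne
          apply Subtype.ext
          apply Finset.eq_of_subset_of_card_le hsub
          rw [(mem_stdSets.1 δ.2).2.2, (mem_stdSets.1 β.2).2.2]
        · intro h; exact absurd (Finset.mem_univ _) h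
      rw [← LinearMap.mem_range, hv]
      apply Submodule.sum_mem
      intro β _
      apply Submodule.smul_mem
      exact hall β (mem_stdSets.1 β.2).1 (mem_stdSets.1 β.2).2.2
    have hbij : Function.Bijective E.vecMulLinear := by
      let e := Fintype.equivOfCardEq hcard
      let L := LinearEquiv.funCongrLeft ℤ ℤ e
      have h1 : Function.Surjective (L.toLinearMap ∘ₗ E.vecMulLinear) := by
        rw [LinearMap.coe_comp]
        exact L.surjective.comp hsurj
      have h2 := OrzechProperty.injective_of_surjective_endomorphism _ h1
      rw [LinearMap.coe_comp] at h2
      exact ⟨h2.of_comp, hsurj⟩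
    exact hbij
  · intro i j hij hj
    ext t β
    rw [Matrix.mul_apply, Matrix.mul_apply]
    have hti : (t : ℕ) < cum n (i + 1) := by
      have := t.2
      have h' := cum_mu' n i (by omega)
      omega
    have htj : (t : ℕ) < (mu n j).toNat := by
      have h' := cum_mu' n j hj
      have := cum_mono n (show i + 1 ≤ j + 1 by omega)
      omega
    obtain ⟨d, hdi, hd1, hd2⟩ := exists_level n i t hti
    have hmem := hg1 d t hd1 hd2
    have hc : (g t).card = d := by
      rw [biStd, Finset.mem_filter, mem_stdSets] at hmem
      exact hmem.1.2.2
    have hL := sum_between n i j (g t) β (by omega) β.2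
    simp only [Matrix.of_apply, W, xf]
    rw [hL, Finset.sum_eq_single (⟨t, htj⟩ : Fin (mu n j).toNat)]
    · congr 1
      simp only [Dmat, Matrix.of_apply, if_true]
      rw [Finset.sum_eq_single d]
      · rw [if_pos, hc]
        have h1 := cum_mu n d (by omega)
        have h2 := cum_mu' n d (by omega)
        omega
      · intro s hs hne
        rw [Finset.mem_range] at hs
        rw [if_neg]
        have h3 := cum_mu n s (by omega)
        have h4 := cum_mu' n s (by omega)
        rintro ⟨h1, h2⟩
        rcases Nat.lt_or_gt_of_ne hne with h | h
        · have := cum_mono n (show s + 1 ≤ d from h)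
          omega
        · have := cum_mono n (show d + 1 ≤ s from h)
          omega
      · intro h
        exact absurd (Finset.mem_range.2 (by omega)) h
    · intro u _ hu
      have : ¬ ((t : ℕ) = (u : ℕ)) := fun h => hu (Fin.ext h.symm)
      simp [Dmat, this]
    · intro h; exact absurd (Finset.mem_univ _) h
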